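/- arXiv:math/0002103 — 2 statements merged into one kernel-verified Lean document; each statement's English description precedes it below -/
import Mathlib

section
/- Let A be an infinite set of positive integers with gcd(A) = 1, and let α > 0. If log p_A(n) ~ c₀√(αn) as n → ∞, where c₀ = π√(2/3), then A has asymptotic density α. -/
/-!
Write `F(t) = ∑ p_A(n) e^{-nt}` and `g(t) = ∑_{a ∈ A} e^{-at}`, with `c = π √(2/3) √α`, so that
`c² / 4 = α π² / 6`. The proof turns the growth of `p_A` into the behaviour of `g` at `0⁺`, and then
the behaviour of `g` into the density of `A`.

* An Abelian step. If `log p_A(n) ~ c √n`, then `t log F(t) → c² / 4` as `t → 0⁺`: the lower bound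
  keeps only the term `n ≈ c² / (4 t²)`, and the upper bound splits `b √n - nt` by the
  arithmetic-geometric mean inequality (`tendsto_mul_log_genFun`).
* Euler's product `F(t) = ∏_{a ∈ A} (1 - e^{-at})⁻¹` gives `log F(t) = ∑_{k ≥ 1} g(kt) / k`
  (`hasSum_log_genFun`, `log_genFun_eq`). It is obtained for finite sets of parts from the recurrence
  `p_{S ∪ {a}}(n) = p_S(n) + p_{S ∪ {a}}(n - a)` and then by passing to the limit.
* Möbius inversion over dilates. Put `h(t) = g(t) - α / t`, which is `O(1 / t)`. By `ζ(2) = π² / 6`,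
  the two previous steps say that `H(t) = ∑ h(kt) / k` satisfies `t H(t) → 0`. Since
  `h(t) = ∑ μ(j) H(jt) / j`, dominated convergence with the bound `O(1 / j²)` gives `t h(t) → 0`
  (`moebius_dilate_inversion`, `tendsto_of_tendsto_dilates`).
* Karamata's Tauberian argument. The bounded coefficients `1_A(n) - α` have Laplace sums `o(1 / t)`.
  This persists with polynomial weights in `e^{-nt}`, hence with continuous weights by Weierstrass,
  hence with the sharp cutoff `n ≤ x`, because the coefficients are bounded and a ramp from `x` to
  `(1 + δ) x` only meets `δ x + 1` integers (`karamata`). So `A(x) - α x = o(x)`.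
-/

open Filter Asymptotics Real

/-- `pA A n` is the number of partitions of `n` all of whose parts lie in `A`. -/
noncomputable def pA (A : Set ℕ) (n : ℕ) : ℕ :=
  Nat.card {p : n.Partition // ∀ a ∈ p.parts, a ∈ A}

/-- `countA A x` is the number of elements of `A` not exceeding `x`. -/
noncomputable def countA (A : Set ℕ) (x : ℝ) : ℕ :=
  {a : ℕ | a ∈ A ∧ (a : ℝ) ≤ x}.ncard

open scoped Topology

/-! ### Euler's product for partitions with parts in `A` -/

lemma pA_mono {A B : Set ℕ} (h : A ⊆ B) (n : ℕ) : pA A n ≤ pA B n :=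
  Nat.card_le_card_of_injective
    (fun p : {p : n.Partition // ∀ a ∈ p.parts, a ∈ A} =>
      (⟨p.1, fun a ha => h (p.2 a ha)⟩ : {p : n.Partition // ∀ a ∈ p.parts, a ∈ B}))
    fun _ _ hpq => Subtype.ext (congrArg (fun r => r.1) hpq)

lemma pA_congr {A B : Set ℕ} {n : ℕ} (h : ∀ a ≤ n, a ∈ A ↔ a ∈ B) : pA A n = pA B n := by
  unfold pA
  congr 1
  refine congrArg Subtype (funext fun p => propext ?_)
  exact forall₂_congr fun a ha => h a (Nat.Partition.le_of_mem_parts ha)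

lemma pA_empty (n : ℕ) : pA ∅ n = if n = 0 then 1 else 0 := by
  unfold pA
  split_ifs with h
  · subst h
    rw [Nat.card_eq_one_iff_unique]
    refine ⟨⟨fun a b => Subtype.ext (Subsingleton.elim _ _)⟩, ⟨⟨default, by simp⟩⟩⟩
  · rw [Nat.card_eq_zero]
    left
    refine ⟨fun ⟨p, hp⟩ => h ?_⟩
    have : p.parts = 0 := Multiset.eq_zero_of_forall_notMem fun a ha => hp a ha
    rw [← p.parts_sum, this, Multiset.sum_zero]

/-- Partitions with parts in `S ∪ {a}` either avoid `a`, or arise by adding one part `a` to a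
partition of `n - a`. -/
lemma pA_insert {S : Set ℕ} {a : ℕ} (ha : 0 < a) (haS : a ∉ S) (n : ℕ) :
    pA (insert a S) n = pA S n + if a ≤ n then pA (insert a S) (n - a) else 0 := by
  classical
  have hsplit : pA (insert a S) n = pA S n +
      Nat.card {p : n.Partition // (∀ b ∈ p.parts, b ∈ insert a S) ∧ a ∈ p.parts} := by
    unfold pA
    simp only [Nat.card_eq_fintype_card, Fintype.card_subtype]
    rw [← Finset.card_union_of_disjoint]
    · congr 1
      ext p
      simp only [Finset.mem_union, Finset.mem_filter, Finset.mem_univ, true_and, Set.mem_insert_iff]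
      constructor
      · intro h
        by_cases hap : a ∈ p.parts
        · exact Or.inr ⟨h, hap⟩
        · refine Or.inl fun b hb => (h b hb).resolve_left ?_
          rintro rfl
          exact hap hb
      · rintro (h | h)
        · exact fun b hb => Or.inr (h b hb)
        · exact h.1
    · rw [Finset.disjoint_left]
      intro p hp hp'
      simp only [Finset.mem_filter, Finset.mem_univ, true_and] at hp hp'
      exact haS (hp a hp'.2)
  rw [hsplit]
  congr 1
  split_ifs with han
  · unfold pA
    let e := Nat.Partition.partitionWithPartEquiv ha han
    refine Nat.card_congr
      { toFun := fun p => ⟨e ⟨p.1, p.2.2⟩, fun b hb => ?_⟩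
        invFun := fun q => ⟨(e.symm q.1).1, fun b hb => ?_, (e.symm q.1).2⟩
        left_inv := fun p => ?_
        right_inv := fun q => ?_ }
    · rw [Nat.Partition.partitionWithPartEquiv_apply_parts] at hb
      exact p.2.1 b (Multiset.mem_of_mem_erase hb)
    · rw [Nat.Partition.partitionWithPartEquiv_symm_apply_parts] at hb
      rcases Multiset.mem_cons.1 hb with rfl | hb
      · exact Set.mem_insert _ _
      · exact q.2 b hb
    · ext1; simp
    · ext1; simp
  · rw [Nat.card_eq_zero]
    left
    exact ⟨fun p => han (Nat.Partition.le_of_mem_parts p.2.2)⟩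

/-- Euler's product for a finite set `s ⊆ A` of parts. Convergence is inherited from the series of
`A`, since `p_s ≤ p_A`. -/
lemma tsum_pA_finset {A : Set ℕ} (hA : ∀ a ∈ A, 0 < a) {x : ℝ} (hx0 : 0 < x) (hx1 : x < 1)
    (hs : Summable fun n => (pA A n : ℝ) * x ^ n) (s : Finset ℕ) (hsA : (s : Set ℕ) ⊆ A) :
    ∑' n, (pA s n : ℝ) * x ^ n = ∏ a ∈ s, (1 - x ^ a)⁻¹ := by
  have hsum : ∀ B : Set ℕ, B ⊆ A → Summable fun n => (pA B n : ℝ) * x ^ n := fun B hB =>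
    Summable.of_nonneg_of_le (fun n => by positivity)
      (fun n => by gcongr; exact pA_mono hB n) hs
  induction s using Finset.induction_on with
  | empty =>
    rw [tsum_eq_single 0]
    · simp [pA_empty]
    · intro n hn
      simp [pA_empty, hn]
  | insert a s has ih =>
    rw [Finset.coe_insert] at hsA ⊢
    have hsA' : (s : Set ℕ) ⊆ A := (Set.subset_insert _ _).trans hsA
    have ha : 0 < a := hA a (hsA (Set.mem_insert _ _))
    have hxa : x ^ a < 1 := pow_lt_one₀ hx0.le hx1 ha.ne'
    have hI := hsum _ hsA
    set q : ℕ → ℝ := fun n => (pA (insert a (s : Set ℕ)) n : ℝ) with hq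
    have hshift : HasSum (fun n => (if a ≤ n then q (n - a) else 0) * x ^ n)
        (x ^ a * ∑' n, q n * x ^ n) := by
      rw [← hasSum_nat_add_iff' a]
      convert! hI.hasSum.mul_left (x ^ a) using 1
      · ext n
        simp only [Nat.le_add_left, if_true, Nat.add_sub_cancel, hq]
        ring
      · rw [Finset.sum_eq_zero, sub_zero]
        intro i hi
        rw [if_neg (by simpa using hi), zero_mul]
    have hrec : ∑' n, q n * x ^ n = ∑' n, (pA s n : ℝ) * x ^ n + x ^ a * ∑' n, q n * x ^ n := by
      have h2 := ((hsum _ hsA').hasSum.add hshift).tsum_eq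
      rw [← h2]
      refine tsum_congr fun n => ?_
      rw [← add_mul]
      congr 1
      simp only [hq]
      rw [pA_insert ha (by exact_mod_cast has) n]
      split_ifs <;> push_cast <;> rfl
    rw [Finset.prod_insert has, ← ih hsA', eq_inv_mul_iff_mul_eq₀ (by linarith)]
    linarith

/-- The logarithm of Euler's product, as the limit over the finite sets `A ∩ [0, N)`. -/
lemma hasSum_log_genFun {A : Set ℕ} (hA : ∀ a ∈ A, 0 < a) {x : ℝ} (hx0 : 0 < x) (hx1 : x < 1)
    (hs : Summable fun n => (pA A n : ℝ) * x ^ n) :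
    HasSum (fun a => A.indicator (fun _ => (1 : ℝ)) a * -log (1 - x ^ a))
      (log (∑' n, (pA A n : ℝ) * x ^ n)) := by
  classical
  have hpos : ∀ a ∈ A, 0 < 1 - x ^ a := fun a ha =>
    sub_pos.2 (pow_lt_one₀ hx0.le hx1 (hA a ha).ne')
  rw [hasSum_iff_tendsto_nat_of_nonneg]
  · set s : ℕ → Finset ℕ := fun N => (Finset.range N).filter (· ∈ A) with hsdef
    have hsA : ∀ N, (s N : Set ℕ) ⊆ A := fun N a ha => by
      simp [hsdef] at ha; exact ha.2
    have hlim : Tendsto (fun N => ∑' n, (pA (s N) n : ℝ) * x ^ n) atTop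
        (𝓝 (∑' n, (pA A n : ℝ) * x ^ n)) := by
      refine tendsto_tsum_of_dominated_convergence hs (fun n => ?_) ?_
      · refine tendsto_const_nhds.congr' ?_
        filter_upwards [eventually_gt_atTop n] with N hN
        rw [pA_congr (A := A) (B := s N)]
        intro a ha
        simp [hsdef, show a < N by omega]
      · refine Eventually.of_forall fun N n => ?_
        rw [Real.norm_eq_abs, abs_of_nonneg (by positivity)]
        gcongr
        exact pA_mono (hsA N) n
    have hFpos : 0 < ∑' n, (pA A n : ℝ) * x ^ n := by
      refine hs.tsum_pos (fun n => by positivity) 0 ?_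
      have h1 : 1 ≤ pA A 0 := by
        have := pA_mono (Set.empty_subset A) 0
        rwa [pA_empty, if_pos rfl] at this
      have : (0 : ℝ) < pA A 0 := by exact_mod_cast h1
      positivity
    refine (hlim.log hFpos.ne').congr fun N => ?_
    rw [tsum_pA_finset hA hx0 hx1 hs _ (hsA N), log_prod, hsdef, Finset.sum_filter]
    · refine Finset.sum_congr rfl fun a _ => ?_
      by_cases ha : a ∈ A <;> simp [ha, log_inv]
    · intro a ha
      exact inv_ne_zero (hpos a (hsA N ha)).ne'
  · intro a
    by_cases ha : a ∈ A
    · simp only [Set.indicator_of_mem ha, one_mul]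
      exact neg_nonneg.2 (log_nonpos (hpos a ha).le (by linarith [pow_pos hx0 a]))
    · simp [ha]

/-! ### The Laplace sum of the indicator of `A` -/

/-- The Laplace sum `∑_{a ∈ A} e^{-at}`, written as a series over `ℕ` weighted by the indicator
function of `A`. -/
noncomputable def laplaceInd (A : Set ℕ) (t : ℝ) : ℝ :=
  ∑' a : ℕ, A.indicator (fun _ => (1 : ℝ)) a * exp (-(a * t))

lemma hasSum_exp_neg {t : ℝ} (ht : 0 < t) :
    HasSum (fun n : ℕ => exp (-(n * t))) (1 - exp (-t))⁻¹ := by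
  convert! hasSum_geometric_of_lt_one (exp_pos (-t)).le (by simpa using ht) using 1
  ext n
  rw [← exp_nat_mul]
  congr 1
  ring

lemma inv_one_sub_exp_neg_le {t : ℝ} (ht : 0 < t) : (1 - exp (-t))⁻¹ ≤ 1 + 1 / t := by
  have h4 : t + 1 ≤ exp t := add_one_le_exp t
  have h5 : (1 - exp (-t))⁻¹ = 1 + 1 / (exp t - 1) := by
    have : exp t - 1 ≠ 0 := by linarith
    rw [exp_neg]
    field_simp
    ring
  rw [h5]
  gcongr
  linarith

lemma summable_laplaceInd (A : Set ℕ) {t : ℝ} (ht : 0 < t) :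
    Summable fun a : ℕ => A.indicator (fun _ => (1 : ℝ)) a * exp (-(a * t)) := by
  refine Summable.of_nonneg_of_le (fun n => ?_) (fun n => ?_) (hasSum_exp_neg ht).summable
  · exact mul_nonneg (Set.indicator_nonneg (fun _ _ => zero_le_one) _) (exp_pos _).le
  · refine mul_le_of_le_one_left (exp_pos _).le ?_
    exact Set.indicator_le_self' (fun _ _ => zero_le_one) _

/-- Comparison with `∑_{n ≥ 1} e^{-nt} = 1 / (e^t - 1)`. -/
lemma laplaceInd_le {A : Set ℕ} (hA : ∀ a ∈ A, 0 < a) {t : ℝ} (ht : 0 < t) :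
    |laplaceInd A t| ≤ 1 / t := by
  have hnn : 0 ≤ laplaceInd A t := tsum_nonneg fun n =>
    mul_nonneg (Set.indicator_nonneg (fun _ _ => zero_le_one) _) (exp_pos _).le
  rw [abs_of_nonneg hnn]
  have h1 := (hasSum_exp_neg ht)
  have h2 : HasSum (fun n : ℕ => exp (-((n + 1 : ℕ) * t))) ((1 - exp (-t))⁻¹ - 1) := by
    have := (hasSum_nat_add_iff' 1).2 h1
    simpa using this
  have h0 : A.indicator (fun _ => (1 : ℝ)) 0 = 0 :=
    Set.indicator_of_notMem (fun h => (hA 0 h).ne' rfl) _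
  have h3 : laplaceInd A t ≤ (1 - exp (-t))⁻¹ - 1 := by
    rw [laplaceInd, (summable_laplaceInd A ht).tsum_eq_zero_add, h0, zero_mul, zero_add,
      ← h2.tsum_eq]
    refine Summable.tsum_le_tsum (fun n => ?_)
      ((summable_nat_add_iff 1).2 (summable_laplaceInd A ht)) h2.summable
    refine mul_le_of_le_one_left (exp_pos _).le ?_
    exact Set.indicator_le_self' (fun _ _ => zero_le_one) _
  linarith [inv_one_sub_exp_neg_le ht]

/-- Expanding `-log (1 - e^{-at}) = ∑ e^{-akt} / k` in Euler's product and exchanging the two sums of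
nonnegative terms. -/
lemma log_genFun_eq {A : Set ℕ} (hA : ∀ a ∈ A, 0 < a) {t : ℝ} (ht : 0 < t)
    (hs : Summable fun n => (pA A n : ℝ) * exp (-t) ^ n) :
    log (∑' n, (pA A n : ℝ) * exp (-t) ^ n) = ∑' k : ℕ+, laplaceInd A (k * t) / k := by
  have hL := hasSum_log_genFun hA (exp_pos (-t)) (by simpa using ht) hs
  set F : ℕ × ℕ+ → ℝ := fun p =>
    A.indicator (fun _ => (1 : ℝ)) p.1 * (exp (-(p.1 * (p.2 * t))) / p.2) with hF
  have hind : ∀ a, 0 ≤ A.indicator (fun _ => (1 : ℝ)) a := fun a =>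
    Set.indicator_nonneg (fun _ _ => zero_le_one) _
  have hFnn : 0 ≤ F := fun p => mul_nonneg (hind _) (by positivity)
  have hrow : ∀ a : ℕ, HasSum (fun k => F (a, k))
      (A.indicator (fun _ => (1 : ℝ)) a * -log (1 - exp (-t) ^ a)) := by
    intro a
    by_cases ha : a ∈ A
    · refine HasSum.mul_left _ ?_
      have hx : |exp (-t) ^ a| < 1 := by
        rw [abs_of_pos (by positivity)]
        exact pow_lt_one₀ (exp_pos _).le (by simpa using ht) (hA a ha).ne'
      have := hasSum_pow_div_log_of_abs_lt_one hx
      rw [← Equiv.pnatEquivNat.hasSum_iff] at this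
      convert! this using 1
      ext k
      have hk : ((k.natPred : ℕ) : ℝ) + 1 = k := by exact_mod_cast k.natPred_add_one
      simp only [Function.comp, Equiv.pnatEquivNat_apply, hk, k.natPred_add_one]
      rw [← pow_mul, ← exp_nat_mul]
      congr 2
      push_cast
      ring
    · simp [hF, ha]
  have hsumF : Summable F := by
    rw [summable_prod_of_nonneg hFnn]
    refine ⟨fun a => (hrow a).summable, ?_⟩
    simp_rw [fun a => (hrow a).tsum_eq]
    exact hL.summable
  rw [← hL.tsum_eq]
  simp_rw [← fun a => (hrow a).tsum_eq]
  have hswap : Summable fun p : ℕ+ × ℕ => F (Equiv.prodComm ℕ+ ℕ p) :=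
    (Equiv.prodComm ℕ+ ℕ).summable_iff.2 hsumF
  rw [← hsumF.tsum_prod, ← (Equiv.prodComm ℕ+ ℕ).tsum_eq, hswap.tsum_prod]
  refine tsum_congr fun k => ?_
  rw [laplaceInd, ← tsum_div_const]
  refine tsum_congr fun a => ?_
  simp [hF, mul_div_assoc]

/-! ### Möbius inversion over dilates -/

lemma summable_pnat_inv_sq : Summable (fun k : ℕ+ => 1 / (k : ℝ) ^ 2) := by
  have h : Summable (fun k : ℕ => 1 / (k : ℝ) ^ 2) := Real.summable_one_div_nat_pow.2 one_lt_two
  exact h.comp_injective PNat.coe_injective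

lemma norm_moebius_le_one (n : ℕ) : |(ArithmeticFunction.moebius n : ℝ)| ≤ 1 := by
  exact_mod_cast ArithmeticFunction.abs_moebius_le_one

lemma summable_dilates {h : ℝ → ℝ} {C : ℝ} (hb : ∀ u, 0 < u → |h u| ≤ C / u)
    {t : ℝ} (ht : 0 < t) : Summable (fun k : ℕ+ => h (k * t) / k) := by
  refine Summable.of_norm_bounded (summable_pnat_inv_sq.mul_left (C / t)) fun k => ?_
  have hk : (0 : ℝ) < k := by exact_mod_cast k.pos
  rw [Real.norm_eq_abs, abs_div, abs_of_pos hk, div_le_iff₀ hk]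
  refine (hb _ (by positivity)).trans (le_of_eq ?_)
  field_simp

/-- If `H(t) = ∑ h(kt) / k`, then `h(t) = ∑ μ(j) H(jt) / j`: the double series is absolutely
convergent, and grouping by `n = jk` leaves `∑_{j ∣ n} μ(j) = [n = 1]`. -/
lemma moebius_dilate_inversion {h : ℝ → ℝ} {C : ℝ} (hb : ∀ u, 0 < u → |h u| ≤ C / u)
    {t : ℝ} (ht : 0 < t) :
    ∑' j : ℕ+, (ArithmeticFunction.moebius j : ℝ) / j *
      ∑' k : ℕ+, h (k * (j * t)) / k = h t := by
  set F : ℕ+ × ℕ+ → ℝ := fun p =>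
    (ArithmeticFunction.moebius p.1 : ℝ) / p.1 * (h (p.2 * (p.1 * t)) / p.2) with hF
  have hsum : Summable F := by
    have h2 : Summable (fun p : ℕ+ × ℕ+ => (1 / (p.1 : ℝ) ^ 2) * (1 / (p.2 : ℝ) ^ 2)) :=
      summable_pnat_inv_sq.mul_of_nonneg summable_pnat_inv_sq
        (fun _ => by positivity) (fun _ => by positivity)
    refine Summable.of_norm_bounded (h2.mul_left (C / t)) fun p => ?_
    have h1 : (0 : ℝ) < p.1 := by exact_mod_cast p.1.pos
    have h2 : (0 : ℝ) < p.2 := by exact_mod_cast p.2.pos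
    rw [hF, Real.norm_eq_abs, abs_mul, abs_div, abs_div, abs_of_pos h1, abs_of_pos h2]
    calc _ ≤ 1 / (p.1 : ℝ) * ((C / (p.2 * (p.1 * t))) / p.2) := by
          gcongr
          · exact norm_moebius_le_one _
          · exact hb _ (by positivity)
      _ = _ := by field_simp
  have e1 : ∑' p, F p = ∑' j : ℕ+, (ArithmeticFunction.moebius j : ℝ) / j *
      ∑' k : ℕ+, h (k * (j * t)) / k := by
    rw [hsum.tsum_prod]
    simp only [hF, tsum_mul_left]
  have hsum' : Summable fun c => F (sigmaAntidiagonalEquivProd c) :=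
    sigmaAntidiagonalEquivProd.summable_iff.2 hsum
  rw [← e1, ← sigmaAntidiagonalEquivProd.tsum_eq, hsum'.tsum_sigma]
  have e2 : ∀ n : ℕ+, ∑' c : Nat.divisorsAntidiagonal n, F (sigmaAntidiagonalEquivProd ⟨n, c⟩)
      = if n = 1 then h t else 0 := by
    intro n
    have hn : (0 : ℝ) < n := by exact_mod_cast n.pos
    have : ∀ c : Nat.divisorsAntidiagonal n, F (sigmaAntidiagonalEquivProd ⟨n, c⟩)
        = (fun q : ℕ × ℕ => (ArithmeticFunction.moebius q.1 : ℝ) * (h (n * t) / n)) c := by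
      rintro ⟨⟨a, b⟩, hc⟩
      have hab : a * b = n := (Nat.mem_divisorsAntidiagonal.1 hc).1
      have hab' : (a : ℝ) * b = n := by exact_mod_cast hab
      have ha : (a : ℝ) ≠ 0 := by rintro h0; simp [h0] at hab'; linarith
      have hb : (b : ℝ) ≠ 0 := by rintro h0; simp [h0] at hab'; linarith
      simp only [hF, sigmaAntidiagonalEquivProd, divisorsAntidiagonalFactors, Equiv.coe_fn_mk,
        PNat.mk_coe]
      rw [← hab', show (b : ℝ) * (a * t) = a * b * t by ring]
      field_simp
    simp_rw [this]
    rw [Finset.tsum_subtype (Nat.divisorsAntidiagonal n)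
      (fun q : ℕ × ℕ => (ArithmeticFunction.moebius q.1 : ℝ) * (h (n * t) / n)),
      ← Finset.sum_mul]
    have h3 : ∑ q ∈ Nat.divisorsAntidiagonal n, (ArithmeticFunction.moebius q.1 : ℝ)
        = if n = 1 then 1 else 0 := by
      have := congrArg (fun f => f (n : ℕ)) (ArithmeticFunction.coe_moebius_mul_coe_zeta (R := ℝ))
      simp only [ArithmeticFunction.mul_apply, ArithmeticFunction.one_apply] at this
      simp only [← PNat.coe_inj, PNat.one_coe]
      rw [← this]
      refine Finset.sum_congr rfl fun q hq => ?_
      have := Nat.ne_zero_of_mem_divisorsAntidiagonal hq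
      simp [this.2]
    rw [h3]
    split_ifs with h1 <;> simp [h1]
  simp_rw [e2]
  simp

/-- The relation `H(t) = o(1 / t)` for `H(t) = ∑ h(kt) / k` passes to `h`, by dominated convergence
in the inversion formula. -/
lemma tendsto_of_tendsto_dilates {h : ℝ → ℝ} {C : ℝ} (hb : ∀ u, 0 < u → |h u| ≤ C / u)
    (hH : Tendsto (fun t => t * ∑' k : ℕ+, h (k * t) / k) (𝓝[>] 0) (𝓝 0)) :
    Tendsto (fun t => t * h t) (𝓝[>] 0) (𝓝 0) := by
  set H : ℝ → ℝ := fun t => ∑' k : ℕ+, h (k * t) / k with hHd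
  set D : ℝ := C * ∑' k : ℕ+, 1 / (k : ℝ) ^ 2
  have hD : ∀ u, 0 < u → |u * H u| ≤ D := by
    intro u hu
    rw [hHd, ← tsum_mul_left, ← Real.norm_eq_abs]
    refine tsum_of_norm_bounded (summable_pnat_inv_sq.hasSum.mul_left C) fun k => ?_
    have hk : (0 : ℝ) < k := by exact_mod_cast k.pos
    rw [Real.norm_eq_abs, abs_mul, abs_div, abs_of_pos hk, abs_of_pos hu]
    calc _ ≤ u * ((C / (k * u)) / k) := by
          gcongr
          exact hb _ (by positivity)
      _ = _ := by field_simp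
  have key : Tendsto (fun t => ∑' j : ℕ+, (ArithmeticFunction.moebius j : ℝ) / (j : ℝ) ^ 2 *
      ((j * t) * H (j * t))) (𝓝[>] 0) (𝓝 (∑' _ : ℕ+, (0 : ℝ))) := by
    refine tendsto_tsum_of_dominated_convergence (bound := fun j : ℕ+ => D * (1 / (j : ℝ) ^ 2))
      (summable_pnat_inv_sq.mul_left D) (fun j => ?_) ?_
    · have hj : (0 : ℝ) < j := by exact_mod_cast j.pos
      have h1 : Tendsto (fun t : ℝ => (j : ℝ) * t) (𝓝[>] 0) (𝓝[>] 0) := by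
        refine tendsto_nhdsWithin_iff.2 ⟨?_, ?_⟩
        · have : Tendsto (fun t : ℝ => (j : ℝ) * t) (𝓝 0) (𝓝 ((j : ℝ) * 0)) :=
            (continuous_const.mul continuous_id).tendsto _
          rw [mul_zero] at this
          exact this.mono_left nhdsWithin_le_nhds
        · filter_upwards [self_mem_nhdsWithin] with t ht
          exact mul_pos hj ht
      simpa using (hH.comp h1).const_mul ((ArithmeticFunction.moebius j : ℝ) / (j : ℝ) ^ 2)
    · filter_upwards [self_mem_nhdsWithin] with t ht j
      have ht : 0 < t := ht
      have hj : (0 : ℝ) < j := by exact_mod_cast j.pos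
      rw [Real.norm_eq_abs, abs_mul, abs_div, mul_comm D]
      gcongr
      · exact norm_moebius_le_one _
      · rw [abs_of_pos (by positivity)]
      · exact hD _ (by positivity)
  rw [tsum_zero] at key
  refine key.congr' ?_
  filter_upwards [self_mem_nhdsWithin] with t ht
  rw [← moebius_dilate_inversion hb ht, ← tsum_mul_left]
  refine tsum_congr fun j => ?_
  have hj : (0 : ℝ) < j := by exact_mod_cast j.pos
  simp only [hHd]
  field_simp

/-! ### The Abelian step -/

/-- The asymptotics of `log q` bound `q n` by `C exp (b √n)` for every `n`, the finitely many small
`n` being absorbed in `C`. -/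
lemma exists_le_exp_sqrt {q : ℕ → ℝ} {c b : ℝ} (hq : ∀ n, 0 ≤ q n) (hc : 0 < c) (hcb : c < b)
    (h : Tendsto (fun n : ℕ => log (q n) / (c * √n)) atTop (𝓝 1)) :
    ∃ C, 0 < C ∧ ∀ n, q n ≤ C * exp (b * √n) := by
  have hev : ∀ᶠ n : ℕ in atTop, q n ≤ exp (b * √n) := by
    filter_upwards [h.eventually_lt_const ((one_lt_div hc).2 hcb), eventually_gt_atTop 0]
      with n hn hn0
    have hs : 0 < √(n : ℝ) := sqrt_pos.2 (by exact_mod_cast hn0)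
    rcases (hq n).eq_or_lt with h0 | h0
    · rw [← h0]; positivity
    · rw [← log_le_iff_le_exp h0]
      rw [div_lt_div_iff₀ (by positivity) hc] at hn
      nlinarith
  obtain ⟨N, hN⟩ := eventually_atTop.1 hev
  have hsum : 0 ≤ ∑ i ∈ Finset.range N, q i := Finset.sum_nonneg fun i _ => hq i
  refine ⟨1 + ∑ i ∈ Finset.range N, q i, by linarith, fun n => ?_⟩
  have hb : 0 < b := hc.trans hcb
  have he : 1 ≤ exp (b * √n) := one_le_exp (by positivity)
  by_cases hn : n < N
  · have := Finset.single_le_sum (f := q) (fun i _ => hq i) (Finset.mem_range.2 hn)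
    nlinarith
  · have := hN n (not_lt.1 hn)
    nlinarith

/-- The share `(1 - η) n t` of the exponent controls `b √n` by the arithmetic-geometric mean
inequality, and the share `η n t` keeps the series convergent. -/
lemma term_le {q : ℕ → ℝ} {C b η t : ℝ} (hη1 : η < 1) (ht : 0 < t)
    (hC : 0 < C) (h : ∀ n, q n ≤ C * exp (b * √n)) (n : ℕ) :
    q n * exp (-t) ^ n ≤ C * exp (b ^ 2 / (4 * (1 - η)) / t) * exp (-(n * (η * t))) := by
  have hs : 0 < (1 - η) * t := mul_pos (by linarith) ht
  have key : b * √n ≤ b ^ 2 / (4 * (1 - η)) / t + (1 - η) * t * n := by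
    have h1 : b ^ 2 / (4 * (1 - η)) / t = b ^ 2 / (4 * ((1 - η) * t)) := by
      rw [div_div]; ring_nf
    rw [h1]
    set s := (1 - η) * t
    have hr : √(n : ℝ) ^ 2 = n := sq_sqrt (Nat.cast_nonneg n)
    rw [div_add' _ _ _ (by positivity), le_div_iff₀ (by positivity)]
    have h2 := sq_nonneg (b - 2 * s * √n)
    rw [sub_sq, mul_pow, hr] at h2
    linarith
  rw [← exp_nat_mul]
  calc q n * exp (n * -t) ≤ C * exp (b * √n) * exp (n * -t) := by gcongr; exact h n
    _ = C * exp (b * √n + n * -t) := by rw [exp_add]; ring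
    _ ≤ C * exp (b ^ 2 / (4 * (1 - η)) / t + -(n * (η * t))) := by
        gcongr ?_ * exp ?_
        linarith
    _ = _ := by rw [exp_add]; ring

lemma summable_of_log_asymp {q : ℕ → ℝ} {c : ℝ} (hq : ∀ n, 0 ≤ q n) (hc : 0 < c)
    (h : Tendsto (fun n : ℕ => log (q n) / (c * √n)) atTop (𝓝 1)) {t : ℝ} (ht : 0 < t) :
    Summable fun n => q n * exp (-t) ^ n := by
  obtain ⟨C, hC, hb⟩ := exists_le_exp_sqrt hq hc (lt_add_one c) h
  exact Summable.of_nonneg_of_le (fun n => mul_nonneg (hq n) (by positivity))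
    (term_le (η := 1 / 2) (by norm_num) ht hC hb)
    ((hasSum_exp_neg (by positivity)).summable.mul_left _)

lemma tendsto_mul_log_one_add_inv {η : ℝ} (hη : 0 < η) :
    Tendsto (fun t => t * log (1 + 1 / (η * t))) (𝓝[>] 0) (𝓝 0) := by
  have hid : Tendsto (fun t : ℝ => t) (𝓝[>] 0) (𝓝 0) := nhdsWithin_le_nhds
  have h1 : Tendsto (fun t => log (η * t + 1)) (𝓝[>] 0) (𝓝 0) := by
    have : Tendsto (fun t => η * t + 1) (𝓝[>] 0) (𝓝 (η * 0 + 1)) :=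
      (hid.const_mul η).add_const 1
    simpa using this.log (by simp)
  have h2 : Tendsto (fun t : ℝ => log t * t) (𝓝[>] 0) (𝓝 0) := by
    simpa only [rpow_one] using tendsto_log_mul_rpow_nhdsGT_zero zero_lt_one
  have h3 := ((hid.mul h1).sub (hid.mul_const (log η))).sub h2
  simp only [mul_zero, zero_mul, sub_zero] at h3
  refine h3.congr' ?_
  filter_upwards [self_mem_nhdsWithin] with t ht
  have ht : 0 < t := ht
  rw [show 1 + 1 / (η * t) = (η * t + 1) / (η * t) by field_simp,
    log_div (by positivity) (by positivity), log_mul hη.ne' ht.ne']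
  ring

/-- If `log q(n) ~ c √n`, then `t log ∑ q(n) e^{-nt} → c² / 4` as `t → 0⁺`. -/
lemma tendsto_mul_log_genFun {q : ℕ → ℝ} {c : ℝ} (hq : ∀ n, 0 ≤ q n) (hc : 0 < c)
    (h : Tendsto (fun n : ℕ => log (q n) / (c * √n)) atTop (𝓝 1)) :
    Tendsto (fun t => t * log (∑' n, q n * exp (-t) ^ n)) (𝓝[>] 0) (𝓝 (c ^ 2 / 4)) := by
  have hid : Tendsto (fun t : ℝ => t) (𝓝[>] 0) (𝓝 0) := nhdsWithin_le_nhds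
  have hlogpos : ∀ᶠ n : ℕ in atTop, 0 < q n := by
    filter_upwards [h.eventually_const_lt one_pos] with n hn
    refine (hq n).lt_of_ne fun h0 => ?_
    simp [← h0] at hn
  -- `n = c² / (4 t²)` maximises `c √n - n t`, with maximal value `c² / (4 t)`
  set m : ℝ → ℕ := fun t => ⌊c ^ 2 / 4 / t ^ 2⌋₊ with hm
  have hx : Tendsto (fun t : ℝ => c ^ 2 / 4 / t ^ 2) (𝓝[>] 0) atTop := by
    have : Tendsto (fun t : ℝ => c ^ 2 / 4 * (t⁻¹) ^ 2) (𝓝[>] 0) atTop :=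
      ((tendsto_pow_atTop two_ne_zero).comp tendsto_inv_nhdsGT_zero).const_mul_atTop
        (by positivity)
    refine this.congr fun t => ?_
    rw [inv_pow, div_eq_mul_inv _ (t ^ 2)]
  have hmtop : Tendsto m (𝓝[>] 0) atTop := tendsto_nat_floor_atTop.comp hx
  have hm2 : Tendsto (fun t => t ^ 2 * (m t : ℝ)) (𝓝[>] 0) (𝓝 (c ^ 2 / 4)) := by
    have := ((tendsto_nat_floor_div_atTop (R := ℝ)).comp hx).mul_const (c ^ 2 / 4)
    rw [one_mul] at this
    refine this.congr' ?_
    filter_upwards [self_mem_nhdsWithin] with t ht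
    have ht : 0 < t := ht
    simp only [Function.comp, hm]
    field_simp
  have hm1 : Tendsto (fun t => t * √(m t : ℝ)) (𝓝[>] 0) (𝓝 (c / 2)) := by
    have := hm2.sqrt
    rw [show c ^ 2 / 4 = (c / 2) ^ 2 by ring, sqrt_sq (by positivity)] at this
    refine this.congr' ?_
    filter_upwards [self_mem_nhdsWithin] with t ht
    have ht : 0 < t := ht
    rw [sqrt_mul (by positivity), sqrt_sq ht.le]
  have hlow : Tendsto (fun t => t * log (q (m t)) - t ^ 2 * (m t : ℝ)) (𝓝[>] 0)
      (𝓝 (c ^ 2 / 4)) := by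
    have := ((h.comp hmtop).mul (hm1.const_mul c)).sub hm2
    rw [show 1 * (c * (c / 2)) - c ^ 2 / 4 = c ^ 2 / 4 by ring] at this
    refine this.congr' ?_
    filter_upwards [hmtop.eventually_gt_atTop 0] with t ht0
    have : 0 < √(m t : ℝ) := sqrt_pos.2 (by exact_mod_cast ht0)
    simp only [Function.comp]
    field_simp
  have hF : ∀ t, 0 < t → ∀ n, q n * exp (-t) ^ n ≤ ∑' n, q n * exp (-t) ^ n := fun t ht n =>
    (summable_of_log_asymp hq hc h ht).le_tsum n fun j _ => mul_nonneg (hq j) (by positivity)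
  refine tendsto_order.2 ⟨fun a ha => ?_, fun a ha => ?_⟩
  · filter_upwards [hlow.eventually_const_lt ha, hmtop.eventually hlogpos, self_mem_nhdsWithin]
      with t h1 h2 ht
    have ht : 0 < t := ht
    refine h1.trans_le ?_
    have h3 := log_le_log (by positivity) (hF t ht (m t))
    rw [log_mul h2.ne' (by positivity), log_pow, log_exp] at h3
    nlinarith
  -- both losses in the upper bound, `b = c + η` and the factor `1 - η`, vanish as `η → 0`
  · obtain ⟨η, hη0, hη1, hηa⟩ : ∃ η : ℝ, 0 < η ∧ η < 1 ∧ (c + η) ^ 2 / (4 * (1 - η)) < a := by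
      have hcont : Tendsto (fun η : ℝ => (c + η) ^ 2 / (4 * (1 - η))) (𝓝[>] 0)
          (𝓝 ((c + 0) ^ 2 / (4 * (1 - 0)))) := by
        refine Tendsto.div ((hid.const_add c).pow 2) ((hid.const_sub 1).const_mul 4) (by norm_num)
      have := hcont.eventually_lt_const (show _ < a by simpa using ha)
      obtain ⟨η, h1, h2, h3⟩ := (this.and ((hid.eventually_lt_const one_pos).and
        self_mem_nhdsWithin)).exists
      exact ⟨η, h3, h2, h1⟩
    obtain ⟨C, hC, hb⟩ := exists_le_exp_sqrt hq hc (show c < c + η by linarith) h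
    set B := (c + η) ^ 2 / (4 * (1 - η)) with hB
    have hup : Tendsto (fun t => t * log C + B + t * log (1 + 1 / (η * t))) (𝓝[>] 0) (𝓝 B) := by
      simpa using ((hid.mul_const (log C)).add_const B).add (tendsto_mul_log_one_add_inv hη0)
    filter_upwards [hup.eventually_lt_const hηa, self_mem_nhdsWithin] with t h1 ht
    have ht : 0 < t := ht
    refine lt_of_le_of_lt ?_ h1
    have hle : ∑' n, q n * exp (-t) ^ n ≤ C * exp (B / t) * (1 + 1 / (η * t)) := by
      have hs := (hasSum_exp_neg (mul_pos hη0 ht)).mul_left (C * exp (B / t))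
      refine ((summable_of_log_asymp hq hc h ht).tsum_le_tsum (term_le hη1 ht hC hb)
        hs.summable).trans ?_
      rw [hs.tsum_eq]
      gcongr
      exact inv_one_sub_exp_neg_le (mul_pos hη0 ht)
    have hFpos : 0 < ∑' n, q n * exp (-t) ^ n := by
      obtain ⟨n, hn⟩ := hlogpos.exists
      exact lt_of_lt_of_le (by positivity) (hF t ht n)
    have h3 := log_le_log hFpos hle
    rw [log_mul (by positivity) (by positivity), log_mul hC.ne' (by positivity), log_exp] at h3
    calc _ ≤ t * (log C + B / t + log (1 + 1 / (η * t))) := by gcongr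
      _ = _ := by field_simp

/-! ### Karamata's Tauberian argument -/

lemma exp_neg_mul_mem {t : ℝ} (ht : 0 < t) (n : ℕ) : exp (-(n * t)) ∈ Set.Icc (0 : ℝ) 1 :=
  ⟨(exp_pos _).le, exp_le_one_iff.2 (by have := mul_nonneg n.cast_nonneg ht.le; linarith)⟩

lemma summable_weighted {c : ℕ → ℝ} {C : ℝ} (hc : ∀ n, |c n| ≤ C) {φ : ℝ → ℝ}
    (hφ : ContinuousOn φ (Set.Icc 0 1)) {t : ℝ} (ht : 0 < t) :
    Summable fun n : ℕ => c n * (exp (-(n * t)) * φ (exp (-(n * t)))) := by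
  obtain ⟨M, hM⟩ := isCompact_Icc.exists_bound_of_continuousOn hφ
  refine Summable.of_norm_bounded ((hasSum_exp_neg ht).summable.mul_left (C * M)) fun n => ?_
  have h1 := hM _ (exp_neg_mul_mem ht n)
  have hC : 0 ≤ C := (abs_nonneg _).trans (hc 0)
  rw [norm_mul, norm_mul, Real.norm_eq_abs (exp _), abs_of_pos (exp_pos _)]
  calc _ ≤ C * (exp (-(n * t)) * M) := by
        gcongr
        exact hc n
    _ = _ := by ring

/-- A monomial weight `y ^ k` in `y = e^{-nt}` only replaces `t` by `(k + 1) t`. -/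
lemma tendsto_weighted_polynomial {c : ℕ → ℝ} {C : ℝ} (hc : ∀ n, |c n| ≤ C)
    (h0 : Tendsto (fun t => t * ∑' n : ℕ, c n * exp (-(n * t))) (𝓝[>] 0) (𝓝 0))
    (P : Polynomial ℝ) :
    Tendsto (fun t => t * ∑' n : ℕ, c n * (exp (-(n * t)) * P.eval (exp (-(n * t)))))
      (𝓝[>] 0) (𝓝 0) := by
  induction P using Polynomial.induction_on' with
  | add P Q hP hQ =>
    have := hP.add hQ
    rw [add_zero] at this
    refine this.congr' ?_
    filter_upwards [self_mem_nhdsWithin] with t ht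
    rw [← mul_add, ← (summable_weighted hc P.continuous.continuousOn ht).tsum_add
      (summable_weighted hc Q.continuous.continuousOn ht)]
    congr 1
    refine tsum_congr fun n => ?_
    rw [Polynomial.eval_add]
    ring
  | monomial k a =>
    have hk : (0 : ℝ) < k + 1 := by positivity
    have h1 : Tendsto (fun t : ℝ => (k + 1 : ℝ) * t) (𝓝[>] 0) (𝓝[>] 0) := by
      refine tendsto_nhdsWithin_iff.2 ⟨?_, ?_⟩
      · have : Tendsto (fun t : ℝ => (k + 1 : ℝ) * t) (𝓝 0) (𝓝 ((k + 1 : ℝ) * 0)) :=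
          (continuous_const.mul continuous_id).tendsto _
        rw [mul_zero] at this
        exact this.mono_left nhdsWithin_le_nhds
      · filter_upwards [self_mem_nhdsWithin] with t ht
        exact mul_pos hk ht
    have h2 := (h0.comp h1).const_mul (a / (k + 1))
    rw [mul_zero] at h2
    refine h2.congr fun t => ?_
    have h3 : ∀ n : ℕ, c n * (exp (-(n * t)) * (Polynomial.monomial k a).eval (exp (-(n * t))))
        = a * (c n * exp (-(n * ((k + 1) * t)))) := by
      intro n
      rw [Polynomial.eval_monomial, ← exp_nat_mul,
        show -(n * ((k + 1) * t)) = -(n * t) + k * -(n * t) by ring, exp_add]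
      ring
    simp_rw [h3, tsum_mul_left]
    simp only [Function.comp]
    field_simp

lemma tendsto_weighted_continuous {c : ℕ → ℝ} {C : ℝ} (hc : ∀ n, |c n| ≤ C)
    (h0 : Tendsto (fun t => t * ∑' n : ℕ, c n * exp (-(n * t))) (𝓝[>] 0) (𝓝 0))
    {φ : ℝ → ℝ} (hφ : ContinuousOn φ (Set.Icc 0 1)) :
    Tendsto (fun t => t * ∑' n : ℕ, c n * (exp (-(n * t)) * φ (exp (-(n * t)))))
      (𝓝[>] 0) (𝓝 0) := by
  have hC : 0 ≤ C := (abs_nonneg _).trans (hc 0)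
  rw [Metric.tendsto_nhds]
  intro ε hε
  set ε' := ε / (4 * (C + 1)) with hε'
  have hε'0 : 0 < ε' := by positivity
  obtain ⟨P, hP⟩ := exists_polynomial_near_of_continuousOn 0 1 φ hφ ε' hε'0
  have hPc : ContinuousOn (fun x => P.eval x) (Set.Icc (0 : ℝ) 1) := P.continuous.continuousOn
  have hid : Tendsto (fun t : ℝ => t) (𝓝[>] 0) (𝓝 0) := nhdsWithin_le_nhds
  filter_upwards [Metric.tendsto_nhds.1 (tendsto_weighted_polynomial hc h0 P) (ε / 2) (by positivity),
    self_mem_nhdsWithin, hid.eventually_lt_const one_pos] with t h1 ht ht1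
  have ht : 0 < t := ht
  rw [Real.dist_eq, sub_zero] at h1 ⊢
  have hdiff : |∑' n : ℕ, c n * (exp (-(n * t)) * φ (exp (-(n * t)))) -
      ∑' n : ℕ, c n * (exp (-(n * t)) * P.eval (exp (-(n * t))))| ≤ C * ε' * (1 + 1 / t) := by
    rw [← (summable_weighted hc hφ ht).tsum_sub (summable_weighted hc hPc ht)]
    have hs := (hasSum_exp_neg ht).mul_left (C * ε')
    have hle : C * ε' * (1 - exp (-t))⁻¹ ≤ C * ε' * (1 + 1 / t) :=
      mul_le_mul_of_nonneg_left (inv_one_sub_exp_neg_le ht) (by positivity)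
    refine le_trans (b := C * ε' * (1 - exp (-t))⁻¹) ?_ hle
    rw [← Real.norm_eq_abs]
    refine tsum_of_norm_bounded hs fun n => ?_
    rw [← mul_sub, ← mul_sub, norm_mul, norm_mul, Real.norm_eq_abs (exp _),
      abs_of_pos (exp_pos _)]
    have h2 := hP _ (exp_neg_mul_mem ht n)
    rw [abs_sub_comm] at h2
    calc _ ≤ C * (exp (-(n * t)) * ε') := by
          gcongr
          exacts [hc n, h2.le]
      _ = _ := by ring
  set U := ∑' n : ℕ, c n * (exp (-(n * t)) * φ (exp (-(n * t))))
  set V := ∑' n : ℕ, c n * (exp (-(n * t)) * P.eval (exp (-(n * t))))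
  have hCε : C * ε' ≤ ε / 4 := by
    rw [hε', ← mul_div_assoc, div_le_div_iff₀ (by positivity) (by positivity)]
    nlinarith
  calc |t * U| = |t * V + t * (U - V)| := by ring_nf
    _ ≤ |t * V| + t * |U - V| := by
        refine (abs_add_le _ _).trans ?_
        rw [abs_mul t (U - V), abs_of_pos ht]
    _ ≤ |t * V| + t * (C * ε' * (1 + 1 / t)) := by gcongr
    _ = |t * V| + C * ε' * (t + 1) := by field_simp
    _ < ε := by nlinarith [mul_nonneg hC hε'0.le]

/-- The piecewise linear function of `y` equal to `0` for `y ≤ q` and to `1` for `y ≥ p`, where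
`q < p`. -/
noncomputable def ramp (p q y : ℝ) : ℝ := max 0 (min 1 ((y - q) / (p - q)))

/-- If `c` is bounded and `∑ c(n) e^{-nt} = o(1 / t)` as `t → 0⁺`, then `∑_{n ≤ x} c(n) = o(x)`. -/
lemma karamata {c : ℕ → ℝ} {C : ℝ} (hc : ∀ n, |c n| ≤ C)
    (h0 : Tendsto (fun t => t * ∑' n : ℕ, c n * exp (-(n * t))) (𝓝[>] 0) (𝓝 0)) :
    Tendsto (fun x : ℝ => (∑ n ∈ Finset.range (⌊x⌋₊ + 1), c n) / x) atTop (𝓝 0) := by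
  have hC : 0 ≤ C := (abs_nonneg _).trans (hc 0)
  rw [Metric.tendsto_nhds]
  intro ε hε
  set δ := ε / (3 * (C + 1)) with hδ
  have hδ0 : 0 < δ := by positivity
  have hCδ : C * δ ≤ ε / 3 := by
    rw [hδ, ← mul_div_assoc, div_le_div_iff₀ (by positivity) (by positivity)]
    nlinarith
  set p := exp (-1) with hp
  set q := exp (-(1 + δ)) with hq
  have hq0 : 0 < q := exp_pos _
  have hqp : q < p := exp_lt_exp.2 (by linarith)
  -- the weight `φ` satisfies `y φ(y) = ramp p q y`; as the ramp vanishes below `q`, the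
  -- denominator `max y q` may replace `y` and makes `φ` continuous at `0`
  set φ : ℝ → ℝ := fun y => ramp p q y / max y q with hφ
  have hφc : Continuous φ := by
    refine Continuous.div (by unfold ramp; fun_prop) (by fun_prop) fun y => ?_
    exact (lt_max_of_lt_right hq0).ne'
  have hyφ : ∀ y, y * φ y = ramp p q y := by
    intro y
    simp only [hφ]
    rcases le_total q y with h | h
    · rw [max_eq_left h, mul_div_cancel₀ _ (by linarith)]
    · have : ramp p q y = 0 := by
        have : (y - q) / (p - q) ≤ 0 := div_nonpos_of_nonpos_of_nonneg (by linarith) (by linarith)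
        exact max_eq_left ((min_le_right _ _).trans this)
      simp [this]
  have hinv : Tendsto (fun x : ℝ => 1 / x) atTop (𝓝[>] 0) := by
    simpa using tendsto_inv_atTop_nhdsGT_zero (𝕜 := ℝ)
  have hinv0 : Tendsto (fun x : ℝ => C / x) atTop (𝓝 0) := tendsto_const_nhds.div_atTop tendsto_id
  filter_upwards [Metric.tendsto_nhds.1
      ((tendsto_weighted_continuous hc h0 hφc.continuousOn).comp hinv) (ε / 3) (by positivity),
    hinv0.eventually_lt_const (show 0 < ε / 3 by positivity), eventually_gt_atTop 0]
    with x h1 h2 hx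
  rw [Real.dist_eq, sub_zero] at h1 ⊢
  simp only [Function.comp, hyφ] at h1
  set y : ℕ → ℝ := fun n => exp (-(n * (1 / x))) with hy
  -- the ramp differs from the indicator of `n ≤ x` only for `x < n ≤ (1 + δ) x`
  have hone : ∀ n : ℕ, n ≤ ⌊x⌋₊ → ramp p q (y n) = 1 := by
    intro n hn
    have hn' : (n : ℝ) ≤ x := (Nat.le_floor_iff hx.le).1 hn
    have : p ≤ y n := exp_le_exp.2 (by
      have : (n : ℝ) * (1 / x) ≤ 1 := by rw [mul_one_div, div_le_one hx]; exact hn'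
      linarith)
    have h3 : 1 ≤ (y n - q) / (p - q) := (one_le_div (by linarith)).2 (by linarith)
    rw [ramp, min_eq_left h3, max_eq_right zero_le_one]
  have hzero : ∀ n : ℕ, ⌊(1 + δ) * x⌋₊ < n → ramp p q (y n) = 0 := by
    intro n hn
    have hn' : (1 + δ) * x < n := (Nat.floor_lt (by positivity)).1 hn
    have : y n ≤ q := exp_le_exp.2 (by
      have : 1 + δ ≤ (n : ℝ) * (1 / x) := by rw [mul_one_div, le_div_iff₀ hx]; exact hn'.le
      linarith)
    have h3 : (y n - q) / (p - q) ≤ 0 := div_nonpos_of_nonpos_of_nonneg (by linarith) (by linarith)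
    exact max_eq_left ((min_le_right _ _).trans h3)
  have hab : ∀ n, |ramp p q (y n)| ≤ 1 := by
    intro n
    rw [abs_of_nonneg (le_max_left _ _)]
    exact max_le zero_le_one (min_le_left _ _)
  have hfl : ⌊x⌋₊ ≤ ⌊(1 + δ) * x⌋₊ := Nat.floor_mono (by nlinarith)
  have hts : ∑' n : ℕ, c n * ramp p q (y n) = ∑ n ∈ Finset.range (⌊x⌋₊ + 1), c n +
      ∑ n ∈ Finset.Ico (⌊x⌋₊ + 1) (⌊(1 + δ) * x⌋₊ + 1), c n * ramp p q (y n) := by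
    rw [tsum_eq_sum (s := Finset.range (⌊(1 + δ) * x⌋₊ + 1)),
      ← Finset.sum_range_add_sum_Ico _ (Nat.succ_le_succ hfl)]
    · congr 1
      refine Finset.sum_congr rfl fun n hn => ?_
      rw [hone n (Nat.lt_succ_iff.1 (Finset.mem_range.1 hn)), mul_one]
    · intro n hn
      rw [hzero n (by simpa using hn), mul_zero]
  have herr : |∑ n ∈ Finset.Ico (⌊x⌋₊ + 1) (⌊(1 + δ) * x⌋₊ + 1), c n * ramp p q (y n)|
      ≤ C * (δ * x + 1) := by
    have h5 : ((⌊(1 + δ) * x⌋₊ + 1 - (⌊x⌋₊ + 1) : ℕ) : ℝ) ≤ δ * x + 1 := by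
      rw [Nat.cast_sub (by omega)]
      push_cast
      have := Nat.floor_le (show 0 ≤ (1 + δ) * x by positivity)
      have := Nat.lt_floor_add_one x
      linarith
    refine (Finset.abs_sum_le_sum_abs _ _).trans ?_
    refine (Finset.sum_le_card_nsmul _ _ C fun n _ => ?_).trans ?_
    · rw [abs_mul]
      exact (mul_le_mul (hc n) (hab n) (abs_nonneg _) hC).trans_eq (mul_one C)
    · rw [Nat.card_Ico, nsmul_eq_mul, mul_comm]
      gcongr
  rw [hts] at h1
  set S := ∑ n ∈ Finset.range (⌊x⌋₊ + 1), c n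
  set R := ∑ n ∈ Finset.Ico (⌊x⌋₊ + 1) (⌊(1 + δ) * x⌋₊ + 1), c n * ramp p q (y n)
  calc |S / x| = |1 / x * (S + R) - R / x| := by ring_nf
    _ ≤ |1 / x * (S + R)| + |R / x| := abs_sub _ _
    _ ≤ |1 / x * (S + R)| + C * (δ * x + 1) / x := by
        rw [abs_div R, abs_of_pos hx]
        gcongr
    _ = |1 / x * (S + R)| + C * δ + C / x := by field_simp; ring
    _ < ε := by linarith

/-! ### The density of `A` -/

lemma countA_eq_sum (A : Set ℕ) {x : ℝ} (hx : 0 ≤ x) :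
    (countA A x : ℝ) = ∑ n ∈ Finset.range (⌊x⌋₊ + 1), A.indicator (fun _ => (1 : ℝ)) n := by
  classical
  have : {a : ℕ | a ∈ A ∧ (a : ℝ) ≤ x} = ((Finset.range (⌊x⌋₊ + 1)).filter (· ∈ A) : Finset ℕ) := by
    ext a
    simp [Nat.le_floor_iff hx, and_comm]
  rw [countA, this, Set.ncard_coe_finset, Finset.card_filter]
  push_cast
  exact Finset.sum_congr rfl fun n _ => by simp [Set.indicator_apply]

lemma tendsto_mul_inv_one_sub_exp :
    Tendsto (fun t : ℝ => t * (1 - exp (-t))⁻¹) (𝓝[>] 0) (𝓝 1) := by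
  have hid : Tendsto (fun t : ℝ => t) (𝓝[>] 0) (𝓝 0) := nhdsWithin_le_nhds
  have h1 : Tendsto (fun t : ℝ => t + 1) (𝓝[>] 0) (𝓝 1) := by simpa using hid.add_const 1
  refine tendsto_of_tendsto_of_tendsto_of_le_of_le' tendsto_const_nhds h1 ?_ ?_
  · filter_upwards [self_mem_nhdsWithin] with t ht
    have ht : 0 < t := ht
    have h2 : 0 < 1 - exp (-t) := sub_pos.2 (by simpa using ht)
    rw [← div_eq_mul_inv, one_le_div h2]
    linarith [add_one_le_exp (-t)]
  · filter_upwards [self_mem_nhdsWithin] with t ht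
    have ht : 0 < t := ht
    calc _ ≤ t * (1 + 1 / t) := by gcongr; exact inv_one_sub_exp_neg_le ht
      _ = t + 1 := by field_simp

lemma tsum_pnat_inv_sq : ∑' k : ℕ+, 1 / (k : ℝ) ^ 2 = π ^ 2 / 6 := by
  rw [tsum_pnat_eq_tsum_succ (f := fun n : ℕ => 1 / (n : ℝ) ^ 2), ← hasSum_zeta_two.tsum_eq,
    hasSum_zeta_two.summable.tsum_eq_zero_add]
  simp

theorem density_of_partition_asymptotics (A : Set ℕ) (hA : ∀ a ∈ A, 0 < a)
    (hinf : A.Infinite) (hgcd : ∀ d : ℕ, (∀ a ∈ A, d ∣ a) → d = 1) (α : ℝ) (hα : 0 < α)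
    (hp : (fun n : ℕ => Real.log (pA A n)) ~[atTop]
      (fun n : ℕ => Real.pi * Real.sqrt (2 / 3) * Real.sqrt (α * n))) :
    Tendsto (fun x : ℝ => (countA A x : ℝ) / x) atTop (nhds α) := by
  set c : ℝ := π * √(2 / 3) * √α with hc
  have hc0 : 0 < c := by positivity
  have hc2 : c ^ 2 / 4 = α * (π ^ 2 / 6) := by
    rw [hc, mul_pow, mul_pow, sq_sqrt (by norm_num), sq_sqrt hα.le]
    ring
  have hq : ∀ n, (0 : ℝ) ≤ pA A n := fun n => Nat.cast_nonneg _
  have hlim : Tendsto (fun n : ℕ => log (pA A n : ℝ) / (c * √n)) atTop (𝓝 1) := by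
    have hne : ∀ᶠ n : ℕ in atTop, π * √(2 / 3) * √(α * n) ≠ 0 := by
      filter_upwards [eventually_gt_atTop 0] with n hn
      have : (0 : ℝ) < n := by exact_mod_cast hn
      positivity
    refine ((isEquivalent_iff_tendsto_one hne).1 hp).congr fun n => ?_
    simp only [Pi.div_apply]
    rw [sqrt_mul hα.le, hc, mul_assoc (π * √(2 / 3))]
  have hgen := tendsto_mul_log_genFun hq hc0 hlim
  -- first transfer the asymptotics to `laplaceInd A t - α / t` by Möbius inversion
  have hbound : ∀ u, 0 < u → |laplaceInd A u - α / u| ≤ (1 + α) / u := by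
    intro u hu
    refine (abs_sub _ _).trans ?_
    rw [abs_of_pos (div_pos hα hu), add_div]
    gcongr
    exact laplaceInd_le hA hu
  have hdil : Tendsto (fun t => t * ∑' k : ℕ+, (laplaceInd A (k * t) - α / (k * t)) / k)
      (𝓝[>] 0) (𝓝 0) := by
    have := hgen.sub_const (c ^ 2 / 4)
    rw [sub_self] at this
    refine this.congr' ?_
    filter_upwards [self_mem_nhdsWithin] with t ht
    have ht : 0 < t := ht
    have h1 : HasSum (fun k : ℕ+ => α / (k * t) / k) (α / t * (π ^ 2 / 6)) := by
      rw [← tsum_pnat_inv_sq]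
      convert! summable_pnat_inv_sq.hasSum.mul_left (α / t) using 1
      ext k
      have hk : (0 : ℝ) < k := by exact_mod_cast k.pos
      field_simp
    simp_rw [sub_div]
    rw [(summable_dilates (fun u hu => laplaceInd_le hA hu) ht).tsum_sub h1.summable, h1.tsum_eq,
      ← log_genFun_eq hA ht (summable_of_log_asymp hq hc0 hlim ht), hc2]
    field_simp
  have hlap := tendsto_of_tendsto_dilates hbound hdil
  -- then apply Karamata's theorem to the balanced coefficients `1_A(n) - α`
  set d : ℕ → ℝ := fun n => A.indicator (fun _ => (1 : ℝ)) n - α with hd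
  have hdb : ∀ n, |d n| ≤ 1 + α := by
    intro n
    refine (abs_sub _ _).trans ?_
    rw [abs_of_pos hα, abs_of_nonneg (Set.indicator_nonneg (fun _ _ => zero_le_one) _)]
    gcongr
    exact Set.indicator_le_self' (fun _ _ => zero_le_one) _
  have hd0 : Tendsto (fun t => t * ∑' n : ℕ, d n * exp (-(n * t))) (𝓝[>] 0) (𝓝 0) := by
    have := (hlap.add_const α).sub (tendsto_mul_inv_one_sub_exp.const_mul α)
    rw [zero_add, mul_one, sub_self] at this
    refine this.congr' ?_
    filter_upwards [self_mem_nhdsWithin] with t ht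
    have ht : 0 < t := ht
    have h1 := (hasSum_exp_neg ht).mul_left α
    simp_rw [hd, sub_mul]
    rw [(summable_laplaceInd A ht).tsum_sub h1.summable, h1.tsum_eq, ← laplaceInd, mul_sub, mul_sub,
      mul_div_cancel₀ _ ht.ne']
    ring
  have hfl : Tendsto (fun x : ℝ => α * ((⌊x⌋₊ : ℝ) / x + 1 / x)) atTop (𝓝 α) := by
    simpa using ((tendsto_nat_floor_div_atTop (R := ℝ)).add
      (tendsto_const_nhds (x := (1 : ℝ)).div_atTop tendsto_id)).const_mul α
  have hfin := (karamata hdb hd0).add hfl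
  rw [zero_add] at hfin
  refine hfin.congr' ?_
  filter_upwards [eventually_gt_atTop 0] with x hx
  rw [countA_eq_sum A hx.le, hd, Finset.sum_sub_distrib, Finset.sum_const, Finset.card_range,
    nsmul_eq_mul]
  push_cast
  field_simp
  ring
end

section
/- Let A be a set of positive integers with gcd(A) = 1. If A has asymptotic density d(A) = 0, then log p_A(n) = o(√n) as n → ∞. -/
/-!
The proof is the standard saddle-point upper bound. For `0 < x < 1`, comparing a partition with its
multiplicity function gives `p_A(n) x ^ n ≤ ∏ (1 - x ^ a)⁻¹`, the product over `a ∈ A`, `a ≤ n`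
(`pA_mul_pow_le`). With `x = exp (-t)`, taking logarithms and expanding
`-log (1 - y) = ∑ y ^ k / k`, this becomes
`log p_A(n) ≤ n t + ∑_{k ≥ 1} G (k t) / k`, where `G s = ∑_{a ∈ A} exp (-s a)` (`log_pA_le`).

Density zero enters through the Abelian statement `s * G s → 0` as `s → 0+` (`tendsto_mul_G`), which
follows from `G s = (1 - r) ∑ A(n) r ^ n` with `r = exp (-s)` and `A(n) ≤ ε n + N`. Since also
`s * G s ≤ 1` for every `s > 0`, dominated convergence for series applied to
`t ∑ G (k t) / k = ∑ (k t) G (k t) / k ^ 2` shows that this quantity tends to `0` as `t → 0+`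
(`tendsto_L`). The choice `t = ε / √n` then yields `log p_A(n) ≤ 2 ε √n` for large `n`.
Only an upper bound is needed, as `log p_A(n) ≥ 0` (with `log 0 = 0` when there is no partition).
-/

open Filter Asymptotics Real

/-- The Dirichlet-type series `∑_{a ∈ A} exp (-s a)`, written as a power series in `exp (-s)`. -/
noncomputable def G (A : Set ℕ) (s : ℝ) : ℝ :=
  ∑' a : ℕ, A.indicator (fun _ => (1 : ℝ)) a * Real.exp (-s) ^ a

lemma exp_neg_lt_one {s : ℝ} (hs : 0 < s) : Real.exp (-s) < 1 := by
  simpa using hs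

lemma indicator_one_nonneg (A : Set ℕ) (a : ℕ) : 0 ≤ A.indicator (fun _ => (1 : ℝ)) a :=
  Set.indicator_nonneg (fun _ _ => zero_le_one) a

lemma indicator_one_le (A : Set ℕ) (a : ℕ) : A.indicator (fun _ => (1 : ℝ)) a ≤ 1 := by
  by_cases h : a ∈ A <;> simp [h]

lemma summable_G (A : Set ℕ) {s : ℝ} (hs : 0 < s) :
    Summable (fun a : ℕ => A.indicator (fun _ => (1 : ℝ)) a * Real.exp (-s) ^ a) := by
  refine Summable.of_nonneg_of_le (fun a => mul_nonneg (indicator_one_nonneg A a) (by positivity))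
    (fun a => ?_) (summable_geometric_of_lt_one (Real.exp_pos (-s)).le (exp_neg_lt_one hs))
  exact mul_le_of_le_one_left (by positivity) (indicator_one_le A a)

lemma G_nonneg (A : Set ℕ) (s : ℝ) : 0 ≤ G A s :=
  tsum_nonneg fun a => mul_nonneg (indicator_one_nonneg A a) (by positivity)

/-- This is `s / (exp s - 1) ≤ 1`. -/
lemma mul_exp_div_le_one {s : ℝ} (hs : 0 < s) :
    s * (Real.exp (-s) / (1 - Real.exp (-s))) ≤ 1 := by
  have h1 := exp_neg_lt_one hs
  rw [← mul_div_assoc, div_le_one (by linarith)]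
  have h2 := Real.add_one_le_exp s
  have h3 : Real.exp s * Real.exp (-s) = 1 := by rw [← Real.exp_add]; simp
  nlinarith [Real.exp_pos (-s)]

lemma mul_G_le_one (A : Set ℕ) (hA : ∀ a ∈ A, 0 < a) {s : ℝ} (hs : 0 < s) : s * G A s ≤ 1 := by
  refine le_trans ?_ (mul_exp_div_le_one hs)
  refine mul_le_mul_of_nonneg_left ?_ hs.le
  have h1 := exp_neg_lt_one hs
  have h0 := (Real.exp_pos (-s)).le
  have h00 : (0 : ℕ) ∉ A := fun h => lt_irrefl _ (hA 0 h)
  have hg := summable_geometric_of_lt_one h0 h1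
  unfold G
  rw [(summable_G A hs).tsum_eq_zero_add]
  simp only [h00, not_false_eq_true, Set.indicator_of_notMem, zero_mul, zero_add]
  calc _ ≤ ∑' a : ℕ, Real.exp (-s) * Real.exp (-s) ^ a := by
        refine Summable.tsum_le_tsum (fun a => ?_) ((summable_nat_add_iff 1).2 (summable_G A hs))
          (hg.mul_left _)
        rw [← pow_succ']
        exact mul_le_of_le_one_left (by positivity) (indicator_one_le A _)
    _ = _ := by rw [tsum_mul_left, tsum_geometric_of_lt_one h0 h1, div_eq_mul_inv]

lemma sum_indicator_eq_countA (A : Set ℕ) (n : ℕ) :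
    ∑ k ∈ Finset.range (n + 1), A.indicator (fun _ => (1 : ℝ)) k = countA A n := by
  classical
  have : {a : ℕ | a ∈ A ∧ (a : ℝ) ≤ n} = ((Finset.range (n + 1)).filter (· ∈ A) : Finset ℕ) := by
    ext a
    simp [and_comm]
  rw [countA, this, Set.ncard_coe_finset]
  simp [Set.indicator_apply]

/-- Summation by parts for `G`, in the form of a Cauchy product with the geometric series. -/
lemma G_hasSum (A : Set ℕ) {s : ℝ} (hs : 0 < s) :
    HasSum (fun n : ℕ => (countA A n : ℝ) * Real.exp (-s) ^ n)
      (G A s * (1 - Real.exp (-s))⁻¹) := by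
  have h1 := exp_neg_lt_one hs
  have h0 := (Real.exp_pos (-s)).le
  have hg := summable_geometric_of_lt_one h0 h1
  have h := hasSum_sum_range_mul_of_summable_norm (summable_G A hs).norm hg.norm
  rw [tsum_geometric_of_lt_one h0 h1] at h
  change HasSum _ (G A s * (1 - Real.exp (-s))⁻¹) at h
  suffices e : (fun n : ℕ => (countA A n : ℝ) * Real.exp (-s) ^ n) = fun n : ℕ =>
      ∑ k ∈ Finset.range (n + 1),
        A.indicator (fun _ => (1 : ℝ)) k * Real.exp (-s) ^ k * Real.exp (-s) ^ (n - k) by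
    rw [e]
    exact h
  funext n
  rw [← sum_indicator_eq_countA, Finset.sum_mul]
  refine Finset.sum_congr rfl fun k hk => ?_
  rw [mul_assoc, ← pow_add, Nat.add_sub_cancel' (Nat.lt_succ_iff.1 (Finset.mem_range.1 hk))]

lemma exists_countA_le (A : Set ℕ)
    (hd : Tendsto (fun x : ℝ => (countA A x : ℝ) / x) atTop (nhds 0)) {ε : ℝ} (hε : 0 < ε) :
    ∃ N : ℕ, ∀ n : ℕ, (countA A n : ℝ) ≤ ε * n + N := by
  have h := (hd.comp tendsto_natCast_atTop_atTop).eventually (gt_mem_nhds hε)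
  obtain ⟨N, hN⟩ := eventually_atTop.1 h
  refine ⟨N + 1, fun n => ?_⟩
  have hεn : 0 ≤ ε * n := by positivity
  rcases lt_or_ge n (N + 1) with hn | hn
  · have h1 : (countA A n : ℝ) ≤ n + 1 := by
      rw [← sum_indicator_eq_countA]
      refine (Finset.sum_le_sum fun k _ => indicator_one_le A k).trans ?_
      simp
    have h2 : (n : ℝ) + 1 ≤ ((N + 1 : ℕ) : ℝ) := by exact_mod_cast hn
    linarith
  · have h1 := hN n (by omega)
    have hn0 : (0 : ℝ) < n := by exact_mod_cast (by omega : 0 < n)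
    simp only [Function.comp] at h1
    rw [div_lt_iff₀ hn0] at h1
    have : (0 : ℝ) ≤ ((N + 1 : ℕ) : ℝ) := by positivity
    linarith

/-- The Abelian step: density zero forces `G A s = o(1 / s)` as `s → 0+`. -/
lemma tendsto_mul_G (A : Set ℕ)
    (hd : Tendsto (fun x : ℝ => (countA A x : ℝ) / x) atTop (nhds 0)) :
    Tendsto (fun s => s * G A s) (nhdsWithin 0 (Set.Ioi 0)) (nhds 0) := by
  rw [Metric.tendsto_nhds]
  intro ε hε
  obtain ⟨N, hN⟩ := exists_countA_le A hd (half_pos hε)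
  have hev : ∀ᶠ s : ℝ in nhdsWithin 0 (Set.Ioi 0), s * N < ε / 2 := by
    have : Tendsto (fun s : ℝ => s * N) (nhdsWithin 0 (Set.Ioi 0)) (nhds 0) := by
      have : Tendsto (fun s : ℝ => s * N) (nhds 0) (nhds (0 * N)) :=
        (continuous_id.mul continuous_const).tendsto 0
      rw [zero_mul] at this
      exact this.mono_left nhdsWithin_le_nhds
    exact this.eventually (gt_mem_nhds (half_pos hε))
  filter_upwards [hev, self_mem_nhdsWithin] with s hs1 hs
  replace hs : 0 < s := hs
  rw [Real.dist_eq, sub_zero, abs_of_nonneg (mul_nonneg hs.le (G_nonneg A s))]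
  have h1 := exp_neg_lt_one hs
  have h0 := (Real.exp_pos (-s)).le
  set r := Real.exp (-s) with hr
  have hS : HasSum (fun n : ℕ => (ε / 2) * (n * r ^ n) + N * r ^ n)
      ((ε / 2) * (r / (1 - r) ^ 2) + N * (1 - r)⁻¹) := by
    refine HasSum.add (HasSum.mul_left _ ?_) ((hasSum_geometric_of_lt_one h0 h1).mul_left _)
    exact hasSum_coe_mul_geometric_of_norm_lt_one (by rwa [Real.norm_of_nonneg h0])
  have hle := hasSum_le (fun n => ?_) (G_hasSum A hs) hS
  · have hr1 : 0 < 1 - r := by linarith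
    have hG : G A s ≤ (ε / 2) * (r / (1 - r)) + N := by
      have := mul_le_mul_of_nonneg_right hle hr1.le
      have e1 : G A s * (1 - r)⁻¹ * (1 - r) = G A s := by field_simp
      have e2 : ((ε / 2) * (r / (1 - r) ^ 2) + N * (1 - r)⁻¹) * (1 - r)
          = (ε / 2) * (r / (1 - r)) + N := by field_simp
      rwa [← hr, e1, e2] at this
    have h2 := mul_exp_div_le_one hs
    rw [← hr] at h2
    calc s * G A s ≤ s * ((ε / 2) * (r / (1 - r)) + N) := mul_le_mul_of_nonneg_left hG hs.le
      _ = (ε / 2) * (s * (r / (1 - r))) + s * N := by ring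
      _ ≤ (ε / 2) * 1 + s * N := by gcongr
      _ < ε := by linarith
  · have := mul_le_mul_of_nonneg_right (hN n) (pow_nonneg h0 n)
    rw [← hr]
    linarith

/-- The rescaled upper bound for the logarithm of the generating function at `exp (-t)`. -/
noncomputable def L (A : Set ℕ) (t : ℝ) : ℝ :=
  ∑' k : ℕ, (((k : ℝ) + 1) * t * G A ((k + 1) * t)) / ((k : ℝ) + 1) ^ 2

lemma summable_inv_sq : Summable (fun k : ℕ => 1 / ((k : ℝ) + 1) ^ 2) := by
  have := (summable_nat_add_iff 1).2 (Real.summable_one_div_nat_pow.2 (by norm_num : 1 < 2))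
  simpa using this

lemma L_term_nonneg (A : Set ℕ) {t : ℝ} (ht : 0 < t) (k : ℕ) :
    0 ≤ (((k : ℝ) + 1) * t * G A ((k + 1) * t)) / ((k : ℝ) + 1) ^ 2 := by
  have := G_nonneg A ((k + 1) * t)
  positivity

lemma L_term_le (A : Set ℕ) (hA : ∀ a ∈ A, 0 < a) {t : ℝ} (ht : 0 < t) (k : ℕ) :
    (((k : ℝ) + 1) * t * G A ((k + 1) * t)) / ((k : ℝ) + 1) ^ 2 ≤ 1 / ((k : ℝ) + 1) ^ 2 := by
  have := mul_G_le_one A hA (s := (k + 1) * t) (by positivity)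
  gcongr

lemma tendsto_L (A : Set ℕ) (hA : ∀ a ∈ A, 0 < a)
    (hd : Tendsto (fun x : ℝ => (countA A x : ℝ) / x) atTop (nhds 0)) :
    Tendsto (L A) (nhdsWithin 0 (Set.Ioi 0)) (nhds 0) := by
  have h := tendsto_tsum_of_dominated_convergence (𝓕 := nhdsWithin (0 : ℝ) (Set.Ioi 0))
    (f := fun (t : ℝ) (k : ℕ) => (((k : ℝ) + 1) * t * G A ((k + 1) * t)) / ((k : ℝ) + 1) ^ 2)
    (g := fun _ => 0) (bound := fun k : ℕ => 1 / ((k : ℝ) + 1) ^ 2) summable_inv_sq ?_ ?_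
  · rw [tsum_zero] at h
    exact h
  · intro k
    have hk : Tendsto (fun t : ℝ => ((k : ℝ) + 1) * t) (nhdsWithin 0 (Set.Ioi 0))
        (nhdsWithin 0 (Set.Ioi 0)) := by
      refine tendsto_nhdsWithin_iff.2 ⟨?_, ?_⟩
      · have : Tendsto (fun t : ℝ => ((k : ℝ) + 1) * t) (nhds 0) (nhds (((k : ℝ) + 1) * 0)) :=
          (continuous_const.mul continuous_id).tendsto 0
        rw [mul_zero] at this
        exact this.mono_left nhdsWithin_le_nhds
      · filter_upwards [self_mem_nhdsWithin] with t ht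
        have : (0 : ℝ) < t := ht
        exact Set.mem_Ioi.2 (by positivity)
    simpa using ((tendsto_mul_G A hd).comp hk).div_const (((k : ℝ) + 1) ^ 2)
  · filter_upwards [self_mem_nhdsWithin] with t ht k
    rw [Real.norm_of_nonneg (L_term_nonneg A ht k)]
    exact L_term_le A hA ht k

/-- The generating-function bound: a partition is determined by its multiplicities, so the
partitions of `n` contribute distinct terms to the expansion of the product of geometric sums. -/
lemma pA_mul_pow_le (A : Set ℕ) (hA : ∀ a ∈ A, 0 < a) (n : ℕ) (S : Finset ℕ)
    (hS : ∀ a, a ∈ S ↔ a ∈ A ∧ a ≤ n) {x : ℝ} (hx0 : 0 < x) (hx1 : x < 1) :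
    (pA A n : ℝ) * x ^ n ≤ ∏ a ∈ S, (1 - x ^ a)⁻¹ := by
  classical
  have hmem : ∀ p : {p : n.Partition // ∀ a ∈ p.parts, a ∈ A}, ∀ a ∈ p.1.parts, a ∈ S :=
    fun p a ha => (hS a).2 ⟨p.2 a ha, p.1.le_of_mem_parts ha⟩
  let F : {p : n.Partition // ∀ a ∈ p.parts, a ∈ A} → (S → ℕ) :=
    fun p a => p.1.parts.count (a : ℕ)
  have hsum : ∀ p, ∑ a : S, F p a * (a : ℕ) = n := by
    intro p
    have h1 : ∑ a ∈ S, p.1.parts.count a * a = n := by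
      have h2 := Finset.sum_multiset_count_of_subset p.1.parts S
        (fun a ha => hmem p a (Multiset.mem_toFinset.1 ha))
      rw [p.1.parts_sum] at h2
      simpa using h2.symm
    rw [← h1]
    exact Finset.sum_coe_sort S (fun a => p.1.parts.count a * a)
  have hinj : Function.Injective F := by
    intro p q hpq
    refine Subtype.ext (Nat.Partition.ext (Multiset.ext.2 fun a => ?_))
    by_cases ha : a ∈ S
    · exact congrFun hpq ⟨a, ha⟩
    · rw [Multiset.count_eq_zero_of_notMem fun h => ha (hmem p a h),
        Multiset.count_eq_zero_of_notMem fun h => ha (hmem q a h)]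
  have hcnt : ∀ p, F p ∈ Fintype.piFinset (fun _ : S => Finset.range (n + 1)) := by
    intro p
    rw [Fintype.mem_piFinset]
    intro a
    rw [Finset.mem_range, Nat.lt_succ_iff]
    have h1 : F p a * (a : ℕ) ≤ n := by
      rw [← hsum p]
      exact Finset.single_le_sum (f := fun a : S => F p a * (a : ℕ))
        (fun _ _ => Nat.zero_le _) (Finset.mem_univ a)
    exact (Nat.le_mul_of_pos_right _ (hA _ ((hS a).1 a.2).1)).trans h1
  calc (pA A n : ℝ) * x ^ n
      = ∑ p : {p : n.Partition // ∀ a ∈ p.parts, a ∈ A}, ∏ a : S, (x ^ (a : ℕ)) ^ F p a := by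
        rw [pA, Nat.card_eq_fintype_card]
        rw [Finset.sum_congr rfl (g := fun _ => x ^ n)]
        · simp
        · intro p _
          simp_rw [← pow_mul]
          rw [Finset.prod_pow_eq_pow_sum]
          congr 1
          rw [← hsum p]
          exact Finset.sum_congr rfl fun a _ => mul_comm _ _
    _ = ∑ f ∈ Finset.univ.image F, ∏ a : S, (x ^ (a : ℕ)) ^ f a := by
        rw [Finset.sum_image fun p _ q _ h => hinj h]
    _ ≤ ∑ f ∈ Fintype.piFinset (fun _ : S => Finset.range (n + 1)),
          ∏ a : S, (x ^ (a : ℕ)) ^ f a := by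
        refine Finset.sum_le_sum_of_subset_of_nonneg ?_ fun _ _ _ => by positivity
        intro f hf
        obtain ⟨p, -, rfl⟩ := Finset.mem_image.1 hf
        exact hcnt p
    _ = ∏ a : S, ∑ k ∈ Finset.range (n + 1), (x ^ (a : ℕ)) ^ k :=
        (Finset.prod_univ_sum (fun _ : S => Finset.range (n + 1))
          (fun a k => (x ^ (a : ℕ)) ^ k)).symm
    _ ≤ ∏ a : S, (1 - x ^ (a : ℕ))⁻¹ := by
        refine Finset.prod_le_prod (fun _ _ => by positivity) fun a _ => ?_
        have ha : x ^ (a : ℕ) < 1 := pow_lt_one₀ hx0.le hx1 (hA _ ((hS a).1 a.2).1).ne'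
        have h0 : 0 ≤ x ^ (a : ℕ) := by positivity
        rw [← tsum_geometric_of_lt_one h0 ha]
        exact (summable_geometric_of_lt_one h0 ha).sum_le_tsum _ fun _ _ => by positivity
    _ = _ := Finset.prod_coe_sort S (fun a => (1 - x ^ a)⁻¹)

/-- Logarithmic form of the generating-function bound, uniform in `t > 0`. -/
lemma log_pA_le (A : Set ℕ) (hA : ∀ a ∈ A, 0 < a) (n : ℕ) {t : ℝ} (ht : 0 < t) :
    Real.log (pA A n) ≤ n * t + L A t / t := by
  classical
  have hL : 0 ≤ L A t := tsum_nonneg (L_term_nonneg A ht)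
  rcases Nat.eq_zero_or_pos (pA A n) with h0 | hpos
  · rw [h0, Nat.cast_zero, Real.log_zero]
    positivity
  have hpos' : (0 : ℝ) < pA A n := by exact_mod_cast hpos
  let S := (Finset.range (n + 1)).filter (· ∈ A)
  have hS : ∀ a, a ∈ S ↔ a ∈ A ∧ a ≤ n := fun a => by
    simp [S, and_comm]
  have hx0 := Real.exp_pos (-t)
  have hx1 := exp_neg_lt_one ht
  set x := Real.exp (-t) with hx
  have hxa : ∀ a ∈ S, x ^ a < 1 := fun a ha =>
    pow_lt_one₀ hx0.le hx1 (hA _ ((hS a).1 ha).1).ne'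
  have hb := Real.log_le_log (by positivity) (pA_mul_pow_le A hA n S hS hx0 hx1)
  rw [Real.log_mul hpos'.ne' (by positivity), Real.log_pow, hx, Real.log_exp, ← hx,
    Real.log_prod (fun a ha => inv_ne_zero (by linarith [hxa a ha]))] at hb
  have hsumlog : HasSum (fun k : ℕ => ∑ a ∈ S, (x ^ a) ^ (k + 1) / ((k : ℝ) + 1))
      (∑ a ∈ S, Real.log (1 - x ^ a)⁻¹) := by
    refine hasSum_sum fun a ha => ?_
    rw [Real.log_inv]
    refine Real.hasSum_pow_div_log_of_abs_lt_one ?_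
    rw [abs_of_nonneg (by positivity)]
    exact hxa a ha
  have hLs : HasSum (fun k : ℕ =>
      (((k : ℝ) + 1) * t * G A ((k + 1) * t)) / ((k : ℝ) + 1) ^ 2 / t) (L A t / t) :=
    (Summable.of_nonneg_of_le (L_term_nonneg A ht) (L_term_le A hA ht)
      summable_inv_sq).hasSum.div_const t
  have hle : ∑ a ∈ S, Real.log (1 - x ^ a)⁻¹ ≤ L A t / t := by
    refine hasSum_le (fun k => ?_) hsumlog hLs
    have hk : (0 : ℝ) < (k : ℝ) + 1 := by positivity
    have e : (((k : ℝ) + 1) * t * G A ((k + 1) * t)) / ((k : ℝ) + 1) ^ 2 / t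
        = G A ((k + 1) * t) / ((k : ℝ) + 1) := by field_simp
    rw [e, ← Finset.sum_div]
    gcongr
    refine le_trans (le_of_eq ?_) ((summable_G A (s := (k + 1) * t) (by positivity)).sum_le_tsum S
      fun a _ => mul_nonneg (indicator_one_nonneg A a) (by positivity))
    refine Finset.sum_congr rfl fun a ha => ?_
    rw [Set.indicator_of_mem ((hS a).1 ha).1, one_mul, hx, ← Real.exp_nat_mul, ← Real.exp_nat_mul,
      ← Real.exp_nat_mul]
    congr 1
    push_cast
    ring
  linarith

theorem partition_littleO_of_density_zero (A : Set ℕ) (hA : ∀ a ∈ A, 0 < a)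
    (hgcd : ∀ d : ℕ, (∀ a ∈ A, d ∣ a) → d = 1)
    (hd : Tendsto (fun x : ℝ => (countA A x : ℝ) / x) atTop (nhds 0)) :
    (fun n : ℕ => Real.log (pA A n)) =o[atTop] (fun n : ℕ => Real.sqrt n) := by
  rw [isLittleO_iff]
  intro c hc
  have hε : 0 < c / 2 := half_pos hc
  set ε := c / 2 with hεc
  have hsq : Tendsto (fun n : ℕ => Real.sqrt n) atTop atTop :=
    Real.tendsto_sqrt_atTop.comp tendsto_natCast_atTop_atTop
  have ht : Tendsto (fun n : ℕ => ε / Real.sqrt n) atTop (nhdsWithin 0 (Set.Ioi 0)) := by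
    refine tendsto_nhdsWithin_iff.2 ⟨hsq.const_div_atTop ε, ?_⟩
    filter_upwards [hsq.eventually_gt_atTop 0] with n hn
    exact Set.mem_Ioi.2 (by positivity)
  have hLe := ((tendsto_L A hA hd).comp ht).eventually (gt_mem_nhds (by positivity : 0 < ε ^ 2))
  filter_upwards [hLe, hsq.eventually_gt_atTop 0] with n hn hpos
  rw [Real.norm_of_nonneg (Real.log_natCast_nonneg _), Real.norm_of_nonneg hpos.le]
  have h1 := log_pA_le A hA n (t := ε / Real.sqrt n) (by positivity)
  have h2 : (n : ℝ) * (ε / Real.sqrt n) = ε * Real.sqrt n := by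
    have := Real.mul_self_sqrt (Nat.cast_nonneg (α := ℝ) n)
    field_simp
    nlinarith
  have h3 : L A (ε / Real.sqrt n) / (ε / Real.sqrt n) ≤ ε * Real.sqrt n := by
    rw [div_le_iff₀ (by positivity)]
    have : ε * Real.sqrt n * (ε / Real.sqrt n) = ε ^ 2 := by field_simp
    rw [this]
    exact le_of_lt hn
  rw [h2] at h1
  have : c * Real.sqrt n = ε * Real.sqrt n + ε * Real.sqrt n := by rw [hεc]; ring
  linarith
end
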